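/- Let H be a primitive, aperiodic and marked substitution over a finite alphabet A, with attractor K, and let φ : A^ℕ → ℝ be the potential defined by φ(x) = log(1 + 1/δ(x)) if x ∉ K and φ(x) = 0 if x ∈ K. Let w_J be a finite word over A not belonging to L_H and let J = [w_J] be the cylinder of sequences beginning with w_J. Then there exists β_0 > 0 such that for every β > β_0 and every x ∈ J, Σ_{n ≥ 1} Σ_{y ∈ J : τ(y) = n and σ^n(y) = x} exp(−β Σ_{k=0}^{n−1} φ(σ^k(y))) < 1, where τ(y) = min{n ≥ 1 : σ^n(y) ∈ J} is the first return time to J (in particular this series converges). -/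

import Mathlib

open Filter Topology MeasureTheory

variable {A : Type*}

/-- The shift map on infinite words. -/
def shift (x : ℕ → A) : ℕ → A := fun n => x (n + 1)

/-- Image of a finite word under a substitution. -/
def wordMap (H : A → List A) (w : List A) : List A := w.flatMap H

/-- Image of an infinite word under a substitution (each `H a` nonempty makes this the
infinite concatenation `H(x₀)H(x₁)⋯`). -/
def substSeq (H : A → List A) (x : ℕ → A) : ℕ → A :=
  fun n => (wordMap H ((List.range (n + 1)).map x)).getD n (x 0)

/-- The prefix of length `n` of an infinite word. -/
def prefixWord (x : ℕ → A) (n : ℕ) : List A := (List.range n).map x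

/-- The factor of length `n` at position `i` of an infinite word. -/
def factorAt (x : ℕ → A) (i n : ℕ) : List A := (List.range n).map fun j => x (i + j)

/-- The language of an infinite word: the set of its finite factors. -/
def Lang (u : ℕ → A) : Set (List A) := {w | ∃ i, w = factorAt u i w.length}

/-- A sequence is (purely) periodic for the shift. -/
def PeriodicSeq (x : ℕ → A) : Prop := ∃ m, 0 < m ∧ ∀ n, x (n + m) = x n

/-- `u` is a fixed point of the substitution `H`. -/
def IsFixedPointSubst (H : A → List A) (u : ℕ → A) : Prop := substSeq H u = u

/-- `H` is primitive: some power of `H` maps every letter onto a word containing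
every letter. -/
def PrimitiveSubst (H : A → List A) : Prop :=
  ∃ k, 0 < k ∧ ∀ a b : A, b ∈ (wordMap H)^[k] [a]

/-- `H` is aperiodic: no fixed point of `H` is periodic for the shift. -/
def AperiodicSubst (H : A → List A) : Prop :=
  ∀ u : ℕ → A, IsFixedPointSubst H u → ¬ PeriodicSeq u

/-- `H` is marked: first letters of images are pairwise distinct, and so are last letters. -/
def MarkedSubst (H : A → List A) (hne : ∀ a, H a ≠ []) : Prop :=
  Function.Injective (fun a => (H a).head (hne a)) ∧
  Function.Injective (fun a => (H a).getLast (hne a))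

/-- `H` is 2-full (with respect to the fixed point `u`): every word of length 2 belongs
to the language. -/
def TwoFull (H : A → List A) (u : ℕ → A) : Prop :=
  ∀ w : List A, w.length = 2 → w ∈ Lang u

/-- The attractor `K`: closure of the shift-orbit of the fixed point `u`. -/
def orbitClosure [TopologicalSpace A] (u : ℕ → A) : Set (ℕ → A) :=
  closure {y | ∃ n, y = shift^[n] u}

/-- `δ(x)`: the length of the maximal prefix of `x` belonging to the language of `u`. -/
noncomputable def delta (u x : ℕ → A) : ℕ := sSup {n | prefixWord x n ∈ Lang u}

/-- The renormalization operator `R`. -/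
noncomputable def renorm (H : A → List A) (V : (ℕ → A) → ℝ) : (ℕ → A) → ℝ :=
  fun x => ∑ i ∈ Finset.range (H (x 0)).length, V (shift^[i] (substSeq H x))

/-- `t_n(x) = |H^n(x₀)|`. -/
def tlen (H : A → List A) (n : ℕ) (x : ℕ → A) : ℕ := ((wordMap H)^[n] [x 0]).length

/-- An accident occurs at time `b`. -/
def AccidentAt (u x : ℕ → A) (b : ℕ) : Prop :=
  0 < b ∧ delta u x - b < delta u (shift^[b] x) ∧
    ∀ i < b, delta u (shift^[i] x) = delta u x - i

/-- The first accident time of `x` (junk value `0` if there is none). -/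
noncomputable def firstAccident (u x : ℕ → A) : ℕ := sInf {b | AccidentAt u x b}

/-- The `j`-th accident time `B_j` of `x`, defined inductively. -/
noncomputable def accidentTime (u x : ℕ → A) : ℕ → ℕ
  | 0 => 0
  | j + 1 => accidentTime u x j + firstAccident u (shift^[accidentTime u x j] x)

/-- The set of (genuine) accident times of `x`. -/
def AccidentSet (u x : ℕ → A) : Set ℕ :=
  {B | ∃ j : ℕ, B = accidentTime u x (j + 1) ∧
        AccidentAt u (shift^[accidentTime u x j] x)
          (firstAccident u (shift^[accidentTime u x j] x))}

/-- A word is right special. -/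
def RightSpecial (u : ℕ → A) (w : List A) : Prop :=
  ∃ b c : A, b ≠ c ∧ w ++ [b] ∈ Lang u ∧ w ++ [c] ∈ Lang u

/-- A word is left special. -/
def LeftSpecial (u : ℕ → A) (w : List A) : Prop :=
  ∃ a b : A, a ≠ b ∧ a :: w ∈ Lang u ∧ b :: w ∈ Lang u

/-- A word is bispecial. -/
def Bispecial (u : ℕ → A) (w : List A) : Prop := RightSpecial u w ∧ LeftSpecial u w

/-- `l` is a recognizability constant for `H`: every long enough word of the language
admits a unique desubstitution. -/
def RecogBound (H : A → List A) (u : ℕ → A) (l : ℕ) : Prop :=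
  ∀ z ∈ Lang u, l < z.length →
    ∃! d : List A × List A × List A,
      ∃ s p : A,
        z = d.1 ++ wordMap H d.2.1 ++ d.2.2 ∧
        d.2.1 ∈ Lang u ∧
        d.1 <:+ H s ∧ d.1.length < (H s).length ∧
        d.2.2 <+: H p ∧ d.2.2.length < (H p).length ∧
        ([s] ++ d.2.1 ++ [p]) ∈ Lang u

/-- The incidence matrix of a substitution, with real entries. -/
def incMat [Fintype A] [DecidableEq A] (H : A → List A) : Matrix A A ℝ :=
  fun a b => ((H a).count b : ℝ)

/-- `lam` is the Perron–Frobenius eigenvalue of the incidence matrix of the (primitive)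
substitution `H`: it admits an entrywise positive eigenvector. -/
def IsPerronValue [Fintype A] [DecidableEq A] (H : A → List A) (lam : ℝ) : Prop :=
  ∃ v : A → ℝ, (∀ a, 0 < v a) ∧ (incMat H).mulVec v = lam • v

/-- Concatenation of a finite word with an infinite word. -/
def catWord (S : List A) (y : ℕ → A) : ℕ → A :=
  fun n => S.getD n (y (n - S.length))

/-- First return time to a set `J` (junk value `0` if the orbit never returns). -/
noncomputable def returnTime (J : Set (ℕ → A)) (y : ℕ → A) : ℕ :=
  sInf {n : ℕ | 1 ≤ n ∧ shift^[n] y ∈ J}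


lemma wordMap_append' (H : A → List A) (l m : List A) :
    wordMap H (l ++ m) = wordMap H l ++ wordMap H m := by
  simp [wordMap]

lemma iter_append (H : A → List A) (k : ℕ) (l m : List A) :
    (wordMap H)^[k] (l ++ m) = (wordMap H)^[k] l ++ (wordMap H)^[k] m := by
  induction k generalizing l m with
  | zero => rfl
  | succ k ih => simp only [Function.iterate_succ_apply, wordMap_append', ih]

lemma iter_nil (H : A → List A) (k : ℕ) : (wordMap H)^[k] [] = [] := by
  have h := iter_append H k [] []
  have h2 := congrArg List.length h
  simp at h2
  exact h2

lemma iter_infix (H : A → List A) (k : ℕ) {l m : List A} (h : l <:+: m) :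
    (wordMap H)^[k] l <:+: (wordMap H)^[k] m := by
  obtain ⟨s, t, rfl⟩ := h
  exact ⟨(wordMap H)^[k] s, (wordMap H)^[k] t, by simp only [iter_append]⟩

lemma length_le_wordMap (H : A → List A) (hne : ∀ a, H a ≠ []) (l : List A) :
    l.length ≤ (wordMap H l).length := by
  induction l with
  | nil => simp
  | cons a l ih =>
    have : 0 < (H a).length := List.length_pos_iff.2 (hne a)
    simp only [wordMap, List.flatMap_cons, List.length_append, List.length_cons] at *
    omega

lemma length_le_iter (H : A → List A) (hne : ∀ a, H a ≠ []) (k : ℕ) (l : List A) :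
    l.length ≤ ((wordMap H)^[k] l).length := by
  induction k generalizing l with
  | zero => simp
  | succ k ih =>
    rw [Function.iterate_succ_apply]
    exact (length_le_wordMap H hne l).trans (ih _)

lemma wordMap_length_le (H : A → List A) (M : ℕ) (hM : ∀ a, (H a).length ≤ M) (l : List A) :
    (wordMap H l).length ≤ M * l.length := by
  induction l with
  | nil => simp [wordMap]
  | cons a l ih =>
    have := hM a
    simp only [wordMap, List.flatMap_cons, List.length_append, List.length_cons] at *
    nlinarith

lemma iter_length_le (H : A → List A) (M : ℕ) (hM : ∀ a, (H a).length ≤ M) (k : ℕ)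
    (l : List A) : ((wordMap H)^[k] l).length ≤ M ^ k * l.length := by
  induction k generalizing l with
  | zero => simp
  | succ k ih =>
    rw [Function.iterate_succ_apply']
    refine (wordMap_length_le H M hM _).trans ?_
    rw [pow_succ, mul_comm (M ^ k) M, mul_assoc]
    exact Nat.mul_le_mul_left _ (ih l)

lemma factorAt_length (u : ℕ → A) (i n : ℕ) : (factorAt u i n).length = n := by
  simp [factorAt]

lemma factorAt_add (u : ℕ → A) (i m n : ℕ) :
    factorAt u i (m + n) = factorAt u i m ++ factorAt u (i + m) n := by
  simp [factorAt, List.range_add, Function.comp_def, add_assoc]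

lemma prefix_eq_factor (u : ℕ → A) (n : ℕ) : prefixWord u n = factorAt u 0 n := by
  simp [factorAt, prefixWord]

lemma factorAt_infix (u : ℕ → A) (i n a m : ℕ) (h : a + m ≤ n) :
    factorAt u (i + a) m <:+: factorAt u i n := by
  obtain ⟨c, rfl⟩ := Nat.exists_eq_add_of_le h
  exact ⟨factorAt u i a, factorAt u (i + (a + m)) c, by simp only [factorAt_add]⟩

lemma factorAt_ext (u v : ℕ → A) (i j n : ℕ) :
    factorAt u i n = factorAt v j n ↔ ∀ r < n, u (i + r) = v (j + r) := by
  simp [factorAt]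

lemma infix_factorAt (u : ℕ → A) (i n : ℕ) (l : List A) (h : l <:+: factorAt u i n) :
    ∃ s, i ≤ s ∧ s + l.length ≤ i + n ∧ l = factorAt u s l.length := by
  obtain ⟨s, t, hst⟩ := h
  have hl := congrArg List.length hst
  simp only [List.length_append, factorAt_length] at hl
  refine ⟨i + s.length, by omega, by omega, ?_⟩
  rw [← hl, factorAt_add, factorAt_add] at hst
  have h1 := (List.append_inj' hst (by simp [factorAt_length])).1
  exact (List.append_inj h1 (by simp [factorAt_length])).2

lemma wordMap_prefix (H : A → List A) (hne : ∀ a, H a ≠ []) (u : ℕ → A)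
    (hu : IsFixedPointSubst H u) (n : ℕ) :
    wordMap H (prefixWord u n) = prefixWord u (wordMap H (prefixWord u n)).length := by
  apply List.ext_getElem
  · simp [prefixWord]
  intro i h1 h2
  have hi : u i = (wordMap H (prefixWord u (i+1))).getD i (u 0) :=
    (congrFun hu i).symm
  have hlen : i < (wordMap H (prefixWord u (i+1))).length := by
    have := length_le_wordMap H hne (prefixWord u (i+1))
    simp only [prefixWord, List.length_map, List.length_range] at this ⊢
    omega
  rw [List.getD_eq_getElem _ _ hlen] at hi
  have e2 : (prefixWord u (wordMap H (prefixWord u n)).length)[i] = u i := by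
    simp [prefixWord]
  rw [e2, hi]
  rcases le_total n (i+1) with h | h
  · obtain ⟨c, hc⟩ := Nat.exists_eq_add_of_le h
    have e : wordMap H (prefixWord u (i+1)) =
        wordMap H (prefixWord u n) ++ wordMap H (factorAt u (0+n) c) := by
      rw [hc, prefix_eq_factor, prefix_eq_factor, factorAt_add, wordMap_append']
    simp only [e]
    rw [List.getElem_append_left h1]
  · obtain ⟨c, hc⟩ := Nat.exists_eq_add_of_le h
    have e : wordMap H (prefixWord u n) =
        wordMap H (prefixWord u (i+1)) ++ wordMap H (factorAt u (0+(i+1)) c) := by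
      rw [hc, prefix_eq_factor, prefix_eq_factor, factorAt_add, wordMap_append']
    simp only [e]
    rw [List.getElem_append_left hlen]

lemma iter_prefix (H : A → List A) (hne : ∀ a, H a ≠ []) (u : ℕ → A)
    (hu : IsFixedPointSubst H u) (k n : ℕ) :
    (wordMap H)^[k] (prefixWord u n) =
      factorAt u 0 ((wordMap H)^[k] (prefixWord u n)).length := by
  induction k with
  | zero => simp [prefixWord, factorAt]
  | succ k ih =>
    rw [Function.iterate_succ_apply', ih, ← prefix_eq_factor, ← prefix_eq_factor]
    exact wordMap_prefix H hne u hu _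

/-- Position of the `j`-th block of order `k`. -/
def blockPos (H : A → List A) (u : ℕ → A) (k j : ℕ) : ℕ :=
  ((wordMap H)^[k] (prefixWord u j)).length

lemma blockPos_zero (H : A → List A) (u : ℕ → A) (k : ℕ) : blockPos H u k 0 = 0 := by
  simp [blockPos, prefixWord, iter_nil]

lemma iter_factor (H : A → List A) (hne : ∀ a, H a ≠ []) (u : ℕ → A)
    (hu : IsFixedPointSubst H u) (k j n : ℕ) :
    blockPos H u k (j + n) = blockPos H u k j + ((wordMap H)^[k] (factorAt u j n)).length ∧
    (wordMap H)^[k] (factorAt u j n) =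
      factorAt u (blockPos H u k j) ((wordMap H)^[k] (factorAt u j n)).length := by
  have h1 := iter_prefix H hne u hu k (j + n)
  have h0 := iter_prefix H hne u hu k j
  have hp : prefixWord u (j + n) = prefixWord u j ++ factorAt u j n := by
    rw [prefix_eq_factor, prefix_eq_factor, factorAt_add, zero_add]
  have h2 : blockPos H u k (j + n) =
      blockPos H u k j + ((wordMap H)^[k] (factorAt u j n)).length := by
    simp only [blockPos, hp, iter_append, List.length_append]
  refine ⟨h2, ?_⟩
  rw [hp, iter_append, List.length_append, factorAt_add, zero_add] at h1
  exact (List.append_inj h1 (by simp [factorAt_length])).2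

lemma factorAt_one (u : ℕ → A) (j : ℕ) : factorAt u j 1 = [u j] := by
  simp [factorAt]

lemma blockPos_succ (H : A → List A) (hne : ∀ a, H a ≠ []) (u : ℕ → A)
    (hu : IsFixedPointSubst H u) (k j : ℕ) :
    blockPos H u k (j + 1) = blockPos H u k j + ((wordMap H)^[k] [u j]).length := by
  rw [(iter_factor H hne u hu k j 1).1, factorAt_one]

lemma le_blockPos (H : A → List A) (hne : ∀ a, H a ≠ []) (u : ℕ → A) (k j : ℕ) :
    j ≤ blockPos H u k j := by
  have := length_le_iter H hne k (prefixWord u j)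
  simpa [prefixWord, blockPos] using this

lemma exists_block (H : A → List A) (hne : ∀ a, H a ≠ []) (u : ℕ → A) (k i : ℕ) :
    ∃ j, blockPos H u k j ≤ i ∧ i < blockPos H u k (j + 1) := by
  classical
  have hex : ∃ j, i < blockPos H u k j :=
    ⟨i + 1, le_blockPos H hne u k (i + 1)⟩
  have h1 := Nat.find_spec hex
  have h2 : Nat.find hex ≠ 0 := by
    intro h
    rw [h, blockPos_zero] at h1
    omega
  obtain ⟨j, hj⟩ := Nat.exists_eq_succ_of_ne_zero h2
  refine ⟨j, ?_, ?_⟩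
  · have := Nat.find_min hex (m := j) (by omega)
    omega
  · rw [hj] at h1; exact h1

/-- Every short enough factor lies inside the image of two consecutive letters. -/
lemma factor_in_two (H : A → List A) (hne : ∀ a, H a ≠ []) (u : ℕ → A)
    (hu : IsFixedPointSubst H u) (k m i : ℕ)
    (hm : ∀ a, m ≤ ((wordMap H)^[k] [a]).length) :
    ∃ j, factorAt u i m <:+: (wordMap H)^[k] (factorAt u j 2) := by
  obtain ⟨j, h1, h2⟩ := exists_block H hne u k i
  refine ⟨j, ?_⟩
  have h3 := blockPos_succ H hne u hu k (j + 1)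
  have h4 := iter_factor H hne u hu k j 2
  have h5 := hm (u (j + 1))
  rw [h4.2]
  obtain ⟨c, rfl⟩ := Nat.exists_eq_add_of_le h1
  apply factorAt_infix
  have h6 : blockPos H u k (j + 1 + 1) = blockPos H u k (j + 2) := rfl
  omega

/-- Growth of a primitive substitution. -/
lemma growth [Fintype A] (hD : 2 ≤ Fintype.card A) (H : A → List A) (hne : ∀ a, H a ≠ [])
    (hprim : PrimitiveSubst H) (m : ℕ) : ∃ k, ∀ a, m ≤ ((wordMap H)^[k] [a]).length := by
  classical
  obtain ⟨p, hp0, hp⟩ := hprim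
  have hcard : ∀ a, 2 ≤ ((wordMap H)^[p] [a]).length := by
    intro a
    have : (Finset.univ : Finset A) ⊆ ((wordMap H)^[p] [a]).toFinset := by
      intro b _; simpa using hp a b
    have := Finset.card_le_card this
    have h2 := List.toFinset_card_le ((wordMap H)^[p] [a])
    rw [Finset.card_univ] at this
    omega
  have hl : ∀ l : List A, 2 * l.length ≤ ((wordMap H)^[p] l).length := by
    intro l
    induction l with
    | nil => simp
    | cons a l ih =>
      rw [show a :: l = [a] ++ l from rfl, iter_append]
      have := hcard a
      simp only [List.length_append, List.length_cons, List.length_nil]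
      omega
  induction m with
  | zero => exact ⟨0, by simp⟩
  | succ m ih =>
    obtain ⟨k, hk⟩ := ih
    refine ⟨p + k, fun a => ?_⟩
    rw [Function.iterate_add_apply]
    have h1 := hl ((wordMap H)^[k] [a])
    have h2 := hk a
    have h3 := length_le_iter H hne k [a]
    simp only [List.length_cons, List.length_nil] at h3
    omega

lemma single_infix {a : A} {l : List A} (h : a ∈ l) : [a] <:+: l := by
  obtain ⟨s, t, rfl⟩ := List.append_of_mem h
  exact ⟨s, t, by simp⟩

/-- All two-letter factors appear in every `H^q(c)`. -/
lemma two_letters [Fintype A] (hD : 2 ≤ Fintype.card A) (H : A → List A) (hne : ∀ a, H a ≠ [])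
    (hprim : PrimitiveSubst H) (u : ℕ → A) (hu : IsFixedPointSubst H u) :
    ∃ q, ∀ j c, factorAt u j 2 <:+: (wordMap H)^[q] [c] := by
  classical
  -- uniform bound on first positions
  have hpos : ∃ N, ∀ j, ∃ i ≤ N, factorAt u i 2 = factorAt u j 2 := by
    have hfin : (Set.range fun j => (u j, u (j + 1))).Finite := Set.toFinite _
    choose f hf using fun z : (Set.range fun j => (u j, u (j + 1))) => z.2
    have hfin2 : (Set.range f).Finite := by
      haveI := hfin.to_subtype
      exact Set.finite_range f
    obtain ⟨N, hN⟩ := hfin2.bddAbove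
    refine ⟨N, fun j => ⟨f ⟨_, ⟨j, rfl⟩⟩, hN ⟨_, rfl⟩, ?_⟩⟩
    have := hf ⟨_, ⟨j, rfl⟩⟩
    simp only [Prod.mk.injEq] at this
    simp [factorAt, List.range_succ, this.1, this.2]
  obtain ⟨N, hN⟩ := hpos
  obtain ⟨q, hq⟩ := growth hD H hne hprim (N + 2)
  obtain ⟨p, hp0, hp⟩ := hprim
  refine ⟨q + p, fun j c => ?_⟩
  obtain ⟨i, hi, hij⟩ := hN j
  rw [← hij, Function.iterate_add_apply]
  refine List.IsInfix.trans ?_ (iter_infix H q (single_infix (hp c (u 0))))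
  have h4 := (iter_factor H hne u hu q 0 1).2
  rw [factorAt_one, blockPos_zero] at h4
  rw [h4]
  have := factorAt_infix u 0 ((wordMap H)^[q] [u 0]).length i 2 (by have := hq (u 0); omega)
  simpa using this

/-- Linear recurrence. -/
lemma linear_recurrence [Fintype A] (hD : 2 ≤ Fintype.card A) (H : A → List A)
    (hne : ∀ a, H a ≠ [])
    (hprim : PrimitiveSubst H) (u : ℕ → A) (hu : IsFixedPointSubst H u) :
    ∃ R, 1 ≤ R ∧ ∀ m, 1 ≤ m → ∀ i i', ∃ s, i' ≤ s ∧ s + m ≤ i' + R * m ∧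
      ∀ r < m, u (s + r) = u (i + r) := by
  classical
  obtain ⟨q, hq⟩ := two_letters hD H hne hprim u hu
  have hgrow := growth hD H hne hprim
  obtain ⟨p, hp0, hp⟩ := hprim
  obtain ⟨M, hM⟩ : ∃ M, ∀ a, (H a).length ≤ M :=
    ⟨∑ a, (H a).length, fun a => Finset.single_le_sum (f := fun a => (H a).length)
      (fun _ _ => Nat.zero_le _) (Finset.mem_univ a)⟩
  have hM1 : 1 ≤ M := by
    have := List.length_pos_iff.2 (hne (u 0))
    have := hM (u 0)
    omega
  -- balance
  have hbal : ∀ k a b, ((wordMap H)^[k] [b]).length ≤ M ^ p * ((wordMap H)^[k] [a]).length := by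
    intro k a b
    have h1 := (iter_infix H k (single_infix (hp a b))).length_le
    rw [← Function.iterate_add_apply, add_comm, Function.iterate_add_apply] at h1
    exact h1.trans (iter_length_le H M hM p _)
  set R := M ^ (q + 1) * M ^ p with hR
  have hR1 : 1 ≤ R := Nat.one_le_iff_ne_zero.2 (by positivity)
  refine ⟨2 * R, by omega, ?_⟩
  intro m hm i i'
  set k := Nat.find (hgrow m) with hk
  have hk1 : ∀ a, m ≤ ((wordMap H)^[k] [a]).length := Nat.find_spec (hgrow m)
  have hk2 : ∀ c, ((wordMap H)^[k + q] [c]).length ≤ R * m := by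
    intro c
    rw [add_comm, Function.iterate_add_apply]
    refine (iter_length_le H M hM q _).trans ?_
    have : ((wordMap H)^[k] [c]).length ≤ M * (M ^ p * m) := by
      rcases Nat.eq_zero_or_pos k with h0 | h0
      · rw [h0]
        simp only [Function.iterate_zero, id_eq, List.length_cons, List.length_nil]
        have : 0 < M * (M ^ p * m) := by positivity
        omega
      · obtain ⟨k', hk'⟩ := Nat.exists_eq_succ_of_ne_zero h0.ne'
        have := Nat.find_min (hgrow m) (m := k') (by omega)
        push Not at this
        obtain ⟨a, ha⟩ := this
        rw [hk', Function.iterate_succ_apply']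
        refine (wordMap_length_le H M hM _).trans ?_
        exact Nat.mul_le_mul_left _ ((hbal k' a c).trans (Nat.mul_le_mul_left _ ha.le))
    calc M ^ q * ((wordMap H)^[k] [c]).length ≤ M ^ q * (M * (M ^ p * m)) :=
          Nat.mul_le_mul_left _ this
      _ = R * m := by rw [hR]; ring
  obtain ⟨j0, hj0⟩ := factor_in_two H hne u hu k m i hk1
  obtain ⟨j, h1, h2⟩ := exists_block H hne u (k + q) i'
  have hin : factorAt u i m <:+: (wordMap H)^[k + q] [u (j + 1)] := by
    rw [Function.iterate_add_apply]
    exact hj0.trans (iter_infix H k (hq j0 _))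
  have h4 := (iter_factor H hne u hu (k + q) (j + 1) 1).2
  rw [factorAt_one] at h4
  rw [h4] at hin
  obtain ⟨s, hs1, hs2, hs3⟩ := infix_factorAt _ _ _ _ hin
  rw [factorAt_length] at hs2 hs3
  have h5 := blockPos_succ H hne u hu (k + q) j
  have h6 := hk2 (u j)
  have h7 := hk2 (u (j + 1))
  refine ⟨s, by omega, ?_, ?_⟩
  · have : 2 * R * m = R * m + R * m := by ring
    omega
  · intro r hr
    exact ((factorAt_ext _ _ _ _ _).1 hs3 r hr).symm

/-- Repetitions are separated. -/
lemma spacing (u : ℕ → A) (hper : ¬ PeriodicSeq u) (R : ℕ) (hR1 : 1 ≤ R)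
    (hR : ∀ m, 1 ≤ m → ∀ i i', ∃ s, i' ≤ s ∧ s + m ≤ i' + R * m ∧
      ∀ r < m, u (s + r) = u (i + r))
    (b t g : ℕ) (hg : 1 ≤ g) (h : ∀ r < b - 1, u (t + r) = u (t + g + r)) :
    b ≤ 2 * R * g := by
  by_contra hcon
  push Not at hcon
  apply hper
  refine ⟨g, hg, fun i => ?_⟩
  obtain ⟨s, h1, h2, h3⟩ := hR (g + 1) (by omega) i t
  have hRg : R * (g + 1) ≤ 2 * R * g := by nlinarith
  obtain ⟨c, rfl⟩ := Nat.exists_eq_add_of_le h1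
  have e1 := h3 0 (by omega)
  have e2 := h3 g (by omega)
  have e3 := h c (by omega)
  simp only [add_zero] at e1
  rw [← e1, ← e2, e3]
  congr 1
  omega

lemma shift_iter (k : ℕ) (y : ℕ → A) (r : ℕ) : shift^[k] y r = y (k + r) := by
  induction k generalizing y with
  | zero => simp
  | succ k ih => rw [Function.iterate_succ_apply, ih, shift]; congr 1; omega

/-- The factor of `y` of length `m` at position `k` occurs in `u`. -/
def Occ (u y : ℕ → A) (k m : ℕ) : Prop := ∃ i, ∀ r < m, y (k + r) = u (i + r)

lemma Occ.mono {u y : ℕ → A} {k m k' m' : ℕ} (h : Occ u y k m) (h1 : k ≤ k')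
    (h2 : k' + m' ≤ k + m) : Occ u y k' m' := by
  obtain ⟨i, hi⟩ := h
  obtain ⟨c, rfl⟩ := Nat.exists_eq_add_of_le h1
  refine ⟨i + c, fun r hr => ?_⟩
  have := hi (c + r) (by omega)
  rw [add_assoc, add_assoc]
  exact this

lemma prefix_mem_Lang (u y : ℕ → A) (k m : ℕ) :
    prefixWord (shift^[k] y) m ∈ Lang u ↔ Occ u y k m := by
  have hlen : (prefixWord (shift^[k] y) m).length = m := by simp [prefixWord]
  simp only [Lang, Set.mem_ofPred_eq, hlen, Occ]
  refine exists_congr fun i => ?_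
  rw [prefix_eq_factor, factorAt_ext]
  simp [shift_iter]

lemma count_ext (u : ℕ → A) (hper : ¬ PeriodicSeq u) (R : ℕ) (hR1 : 1 ≤ R)
    (hR : ∀ m, 1 ≤ m → ∀ i i', ∃ s, i' ≤ s ∧ s + m ≤ i' + R * m ∧
      ∀ r < m, u (s + r) = u (i + r))
    (b : ℕ) (hb : 1 ≤ b) (x : ℕ → A) :
    ∃ X : Finset (ℕ → A), X.card ≤ 4 * R ^ 2 ∧
      ∀ x', shift^[b] x' = x → Occ u x' 0 (2 * b - 1) → x' ∈ X := by
  classical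
  set S : Set (ℕ → A) := {x' | shift^[b] x' = x ∧ Occ u x' 0 (2 * b - 1)} with hS
  have hpos : ∀ z : S, ∃ s, s + (2 * b - 1) ≤ R * (2 * b - 1) ∧
      ∀ r < 2 * b - 1, z.1 r = u (s + r) := by
    intro z
    obtain ⟨i, hi⟩ := z.2.2
    obtain ⟨s, _, h2, h3⟩ := hR (2 * b - 1) (by omega) i 0
    refine ⟨s, by omega, fun r hr => ?_⟩
    rw [h3 r hr, ← hi r hr, zero_add]
  choose s hs1 hs2 using hpos
  have hlt : ∀ z, 2 * R * s z / b < 4 * R ^ 2 := by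
    intro z
    rw [Nat.div_lt_iff_lt_mul (by omega)]
    have h1 := hs1 z
    have h2 : s z < R * (2 * b) := by
      have : R * (2 * b - 1) ≤ R * (2 * b) := Nat.mul_le_mul_left _ (by omega)
      omega
    have h3 : 2 * R * s z < 2 * R * (R * (2 * b)) := Nat.mul_lt_mul_of_pos_left h2 (by omega)
    calc 2 * R * s z < 2 * R * (R * (2 * b)) := h3
      _ = 4 * R ^ 2 * b := by ring
  have hx : ∀ z : S, ∀ r, z.1 (b + r) = x r := by
    intro z r
    rw [← shift_iter b z.1 r, z.2.1]
  have hgap : ∀ z w : S, s z < s w → 2 * R * s z / b < 2 * R * s w / b := by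
    intro z w hzw
    have h1 := spacing u hper R hR1 hR b (s z + b) (s w - s z) (by omega) (by
      intro r hr
      have e1 := hs2 z (b + r) (by omega)
      have e2 := hs2 w (b + r) (by omega)
      rw [hx] at e1 e2
      rw [show s z + b + r = s z + (b + r) by omega,
        show s z + b + (s w - s z) + r = s w + (b + r) by omega, ← e1, ← e2])
    have h2 : 2 * R * s z + b ≤ 2 * R * s w := by
      have : 2 * R * s w = 2 * R * s z + 2 * R * (s w - s z) := by
        rw [← mul_add]; congr 1; omega
      omega
    have h3 : (2 * R * s z + b) / b ≤ 2 * R * s w / b := Nat.div_le_div_right h2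
    rw [Nat.add_div_right _ (by omega)] at h3
    omega
  have hinj : Function.Injective
      (fun z : S => (⟨2 * R * s z / b, hlt z⟩ : Fin (4 * R ^ 2))) := by
    intro z w hzw
    simp only [Fin.mk.injEq] at hzw
    have hs : s z = s w := by
      rcases lt_trichotomy (s z) (s w) with h | h | h
      · have := hgap z w h; omega
      · exact h
      · have := hgap w z h; omega
    apply Subtype.ext
    funext r
    by_cases hr : r < b
    · rw [hs2 z r (by omega), hs2 w r (by omega), hs]
    · obtain ⟨c, rfl⟩ := Nat.exists_eq_add_of_le (not_lt.1 hr)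
      rw [hx, hx]
  haveI : Finite S := Finite.of_injective _ hinj
  haveI : Fintype S := Fintype.ofFinite S
  refine ⟨S.toFinset, ?_, ?_⟩
  · rw [Set.toFinset_card]
    simpa using Fintype.card_le_of_injective _ hinj
  · intro x' h1 h2
    rw [Set.mem_toFinset]
    exact ⟨h1, h2⟩

/-- Pairs `(n, y)` obtained from `x` by `l` left extension steps with controlled scales. -/
def Pre (u : ℕ → A) : ℕ → ℕ → (ℕ → A) → Set (ℕ × (ℕ → A))
  | 0, _, x => {(0, x)}
  | l + 1, e, x => {q | ∃ e' < e + 2, ∃ x', shift^[2 ^ e'] x' = x ∧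
      Occ u x' 0 (2 * 2 ^ e' - 1) ∧ ∃ q' ∈ Pre u l e' x', q = (q'.1 + 2 ^ e', q'.2)}

lemma Pre_count (u : ℕ → A) (C : ℕ)
    (hC : ∀ b, 1 ≤ b → ∀ x : ℕ → A, ∃ X : Finset (ℕ → A), X.card ≤ C ∧
      ∀ x', shift^[b] x' = x → Occ u x' 0 (2 * b - 1) → x' ∈ X) (l e : ℕ) (x : ℕ → A) :
    ∃ F : Finset (ℕ × (ℕ → A)), F.card ≤ (4 * C) ^ l * 2 ^ e ∧ ∀ q ∈ Pre u l e x, q ∈ F := by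
  classical
  induction l generalizing e x with
  | zero =>
    refine ⟨{(0, x)}, ?_, ?_⟩
    · simp [Nat.one_le_two_pow]
    · intro q hq
      simpa [Pre] using hq
  | succ l ih =>
    choose F hF1 hF2 using ih
    choose X hX1 hX2 using fun e' : ℕ => hC (2 ^ e') Nat.one_le_two_pow x
    refine ⟨(Finset.range (e + 2)).biUnion fun e' => (X e').biUnion fun x' =>
      (F e' x').image fun q' => (q'.1 + 2 ^ e', q'.2), ?_, ?_⟩
    · refine Finset.card_biUnion_le.trans ?_
      have h1 : ∀ e' ∈ Finset.range (e + 2), ((X e').biUnion fun x' =>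
          (F e' x').image fun q' => (q'.1 + 2 ^ e', q'.2)).card ≤
            (C * (4 * C) ^ l) * 2 ^ e' := by
        intro e' _
        have h2 : ((X e').biUnion fun x' =>
          (F e' x').image fun q' => (q'.1 + 2 ^ e', q'.2)).card ≤
            (X e').card * ((4 * C) ^ l * 2 ^ e') :=
          Finset.card_biUnion_le_card_mul _ _ _ fun x' _ =>
            Finset.card_image_le.trans (hF1 e' x')
        refine h2.trans ?_
        rw [mul_assoc]
        exact Nat.mul_le_mul_right _ (hX1 e')
      refine (Finset.sum_le_sum h1).trans ?_
      rw [← Finset.mul_sum]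
      have h3 : ∑ i ∈ Finset.range (e + 2), 2 ^ i ≤ 2 ^ (e + 2) := by
        rw [Nat.geomSum_eq (le_refl 2)]
        simp
      refine (Nat.mul_le_mul_left _ h3).trans (le_of_eq ?_)
      ring
    · rintro q ⟨e', he', x', h1, h2, q', hq', rfl⟩
      simp only [Finset.mem_biUnion, Finset.mem_range, Finset.mem_image]
      exact ⟨e', he', x', hX2 e' x' h1 h2, q', hF2 e' x' q' hq', rfl⟩

lemma greedy_exists (u y : ℕ → A) (hlet : ∀ a, ∃ i, u i = a) :
    ∃ e : ℕ → ℕ, ∀ K, 1 ≤ K → 2 ^ e K ≤ K ∧ Occ u y (K - 2 ^ e K) (2 * 2 ^ e K - 1) ∧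
      ∀ e', 2 ^ e' ≤ K → Occ u y (K - 2 ^ e') (2 * 2 ^ e' - 1) → e' ≤ e K := by
  classical
  refine ⟨fun K => Nat.findGreatest
    (fun e => 2 ^ e ≤ K ∧ Occ u y (K - 2 ^ e) (2 * 2 ^ e - 1)) K, fun K hK => ?_⟩
  have h0 : 2 ^ 0 ≤ K ∧ Occ u y (K - 2 ^ 0) (2 * 2 ^ 0 - 1) := by
    refine ⟨by simpa using hK, ?_⟩
    obtain ⟨i, hi⟩ := hlet (y (K - 1))
    refine ⟨i, fun r hr => ?_⟩
    have : r = 0 := by simp at hr; omega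
    subst this
    simp [hi]
  have h1 := Nat.findGreatest_spec
    (P := fun e => 2 ^ e ≤ K ∧ Occ u y (K - 2 ^ e) (2 * 2 ^ e - 1)) (Nat.zero_le K) h0
  refine ⟨h1.1, h1.2, fun e' h2 h3 => ?_⟩
  exact Nat.le_findGreatest (by have := Nat.lt_two_pow_self (n := e'); omega) ⟨h2, h3⟩

lemma chain (u y : ℕ → A) (e : ℕ → ℕ)
    (he : ∀ K, 1 ≤ K → 2 ^ e K ≤ K ∧ Occ u y (K - 2 ^ e K) (2 * 2 ^ e K - 1) ∧
      ∀ e', 2 ^ e' ≤ K → Occ u y (K - 2 ^ e') (2 * 2 ^ e' - 1) → e' ≤ e K) (K : ℕ) :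
    ∃ T : Finset ℕ, (∀ k ∈ T, 1 ≤ k ∧ k ≤ K) ∧
      (∀ k ∈ T, ∀ k' ∈ T, k < k' → k + 2 ^ e k' ≤ k') ∧
      (Real.log (3 / 2) * (T.filter fun k => k < 3 * 2 ^ e k).card ≤ Real.log (2 * K + 1)) ∧
      ∀ e0, (1 ≤ K → e K < e0 + 2) → (K, y) ∈ Pre u T.card e0 (shift^[K] y) := by
  classical
  induction K using Nat.strong_induction_on with
  | _ K ih =>
    rcases Nat.eq_zero_or_pos K with h0 | h0
    · subst h0
      refine ⟨∅, by simp, by simp, by simp, fun e0 _ => ?_⟩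
      simp [Pre]
    · obtain ⟨h1, h2, h3⟩ := he K h0
      have hb : 0 < 2 ^ e K := by positivity
      obtain ⟨T, t1, t2, t3, t4⟩ := ih (K - 2 ^ e K) (by omega)
      have hKT : K ∉ T := fun h => by have := (t1 K h).2; omega
      refine ⟨insert K T, ?_, ?_, ?_, ?_⟩
      · intro k hk
        rcases Finset.mem_insert.1 hk with rfl | hk
        · exact ⟨h0, le_refl _⟩
        · have := t1 k hk; omega
      · intro k hk k' hk' hlt
        rcases Finset.mem_insert.1 hk with e1 | g1
        · rcases Finset.mem_insert.1 hk' with e2 | g2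
          · omega
          · have := t1 _ g2; omega
        · rcases Finset.mem_insert.1 hk' with e2 | g2
          · have := t1 _ g1
            rw [e2]; omega
          · exact t2 k g1 k' g2 hlt
      · rw [Finset.filter_insert]
        have hcast : ((K - 2 ^ e K : ℕ) : ℝ) = (K : ℝ) - 2 ^ e K := by
          rw [Nat.cast_sub h1]; push_cast; ring
        rw [hcast] at t3
        have h1' : (2 : ℝ) ^ e K ≤ K := by exact_mod_cast h1
        split_ifs with hif
        · rw [Finset.card_insert_of_notMem (by simp [hKT])]
          push_cast
          rw [mul_add, mul_one]
          have hif' : (K : ℝ) + 1 ≤ 3 * 2 ^ e K := by exact_mod_cast hif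
          refine (add_le_add_left t3 _).trans ?_
          rw [← Real.log_mul (by linarith) (by norm_num)]
          apply Real.log_le_log
          · nlinarith
          · linarith
        · refine t3.trans ?_
          have : (0 : ℝ) < 2 ^ e K := by positivity
          exact Real.log_le_log (by linarith) (by linarith)
      · intro e0 hee
        rw [Finset.card_insert_of_notMem hKT]
        refine ⟨e K, hee h0, shift^[K - 2 ^ e K] y, ?_, ?_, (K - 2 ^ e K, y), ?_, ?_⟩
        · rw [← Function.iterate_add_apply]; congr 1; congr 1; omega
        · obtain ⟨i, hi⟩ := h2
          refine ⟨i, fun r hr => ?_⟩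
          rw [shift_iter, zero_add]
          exact hi r hr
        · apply t4
          intro hK'
          by_contra hcon
          push Not at hcon
          obtain ⟨g1, g2, _⟩ := he _ hK'
          have hpow : 4 * 2 ^ e K ≤ 2 ^ e (K - 2 ^ e K) := by
            calc 4 * 2 ^ e K = 2 ^ (e K + 2) := by ring
              _ ≤ _ := Nat.pow_le_pow_right (by norm_num) hcon
          have h2p : 2 ^ (e K + 1) = 2 * 2 ^ e K := by ring
          have := h3 (e K + 1) (by omega) (g2.mono (by omega) (by omega))
          omega
        · simp only [Prod.mk.injEq, and_true]; omega

lemma geom_inj (E : Finset ℕ) (m : ℝ) (h : ∀ e ∈ E, (1 / 2 : ℝ) ^ e ≤ m) (hm : 0 ≤ m) :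
    ∑ e ∈ E, (1 / 2 : ℝ) ^ e ≤ 2 * m := by
  rcases E.eq_empty_or_nonempty with rfl | hE
  · simpa using hm
  · set e0 := E.min' hE
    have h0 := h e0 (E.min'_mem hE)
    have hs : HasSum (fun i : ℕ => (1 / 2 : ℝ) ^ (e0 + i)) (2 * (1 / 2 : ℝ) ^ e0) := by
      have := hasSum_geometric_two.mul_left ((1 / 2 : ℝ) ^ e0)
      simpa [pow_add, mul_comm] using this
    have h1 : ∑ e ∈ E, (1 / 2 : ℝ) ^ e =
        ∑ i ∈ E.image (fun e => e - e0), (1 / 2 : ℝ) ^ (e0 + i) := by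
      rw [Finset.sum_image]
      · refine Finset.sum_congr rfl fun e hee => ?_
        have := E.min'_le e hee
        congr 1; omega
      · intro a ha b hb hab
        have := E.min'_le a ha
        have := E.min'_le b hb
        simp only at hab
        omega
    rw [h1]
    have := sum_le_hasSum (E.image (fun e => e - e0)) (fun i _ => by positivity) hs
    linarith

lemma count_A (n : ℕ) (e : ℕ → ℕ) (T : Finset ℕ) (a : ℕ → ℝ) (ha : ∀ k < n, 0 ≤ a k)
    (t1 : ∀ k ∈ T, 1 ≤ k ∧ k ≤ n)
    (t2 : ∀ k ∈ T, ∀ k' ∈ T, k < k' → k + 2 ^ e k' ≤ k')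
    (t3 : ∀ K ∈ T, 3 * 2 ^ e K ≤ K)
    (h : ∀ K ∈ T, ∀ k, K - 3 * 2 ^ e K ≤ k → k < K - 2 * 2 ^ e K →
      (1 / 2 : ℝ) ^ e K ≤ 5 * a k) :
    (T.card : ℝ) ≤ 10 * ∑ k ∈ Finset.range n, a k := by
  classical
  have h1 : ∀ K ∈ T, (1 : ℝ) = ∑ k ∈ Finset.range n,
      if K - 3 * 2 ^ e K ≤ k ∧ k < K - 2 * 2 ^ e K then (1 / 2 : ℝ) ^ e K else 0 := by
    intro K hK
    rw [← Finset.sum_filter, Finset.sum_const]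
    have : (Finset.range n).filter (fun k => K - 3 * 2 ^ e K ≤ k ∧ k < K - 2 * 2 ^ e K) =
        Finset.Ico (K - 3 * 2 ^ e K) (K - 2 * 2 ^ e K) := by
      ext k
      simp only [Finset.mem_filter, Finset.mem_range, Finset.mem_Ico]
      have := t1 K hK
      omega
    rw [this, Nat.card_Ico]
    have h3 := t3 K hK
    rw [show K - 2 * 2 ^ e K - (K - 3 * 2 ^ e K) = 2 ^ e K by omega]
    rw [nsmul_eq_mul]; push_cast
    rw [← mul_pow]; norm_num
  have h2 : (T.card : ℝ) = ∑ K ∈ T, (1 : ℝ) := by simp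
  rw [h2, Finset.sum_congr rfl h1, Finset.sum_comm, Finset.mul_sum]
  refine Finset.sum_le_sum fun k hk => ?_
  rw [← Finset.sum_filter]
  set T' := T.filter (fun K => K - 3 * 2 ^ e K ≤ k ∧ k < K - 2 * 2 ^ e K) with hT'
  have hinj : Set.InjOn e T' := by
    intro K hK K' hK' hee
    simp only [hT', Finset.coe_filter, Set.mem_ofPred_eq] at hK hK'
    have q1 := t3 K hK.1
    have q2 := t3 K' hK'.1
    rcases lt_trichotomy K K' with hlt | hlt | hlt
    · have := t2 K hK.1 K' hK'.1 hlt
      rw [hee] at hK q1; omega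
    · exact hlt
    · have := t2 K' hK'.1 K hK.1 hlt
      rw [hee] at hK q1 this; omega
  have h4 : ∑ K ∈ T', (1 / 2 : ℝ) ^ e K = ∑ e' ∈ T'.image e, (1 / 2 : ℝ) ^ e' :=
    (Finset.sum_image hinj).symm
  rw [h4]
  have := geom_inj (T'.image e) (5 * a k) (by
    intro e' he'
    obtain ⟨K, hK, rfl⟩ := Finset.mem_image.1 he'
    simp only [hT', Finset.mem_filter] at hK
    exact h K hK.1 k hK.2.1 hK.2.2) (by have := ha k (Finset.mem_range.1 hk); linarith)
  linarith

lemma log_sum (n N : ℕ) (hN : 1 ≤ N) (a : ℕ → ℝ)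
    (ha : ∀ k < n, 1 / ((n + N - k : ℕ) : ℝ) ≤ a k) :
    Real.log (n + N + 1) - Real.log (N + 1) ≤ ∑ k ∈ Finset.range n, a k := by
  have h1 := Finset.sum_range_sub' (fun k : ℕ => Real.log ((n : ℝ) + N + 1 - k)) n
  have h2 : Real.log ((n : ℝ) + N + 1 - (0 : ℕ)) - Real.log ((n : ℝ) + N + 1 - n) =
      Real.log (n + N + 1) - Real.log (N + 1) := by
    congr 2
    · simp
    · ring
  rw [← h2, ← h1]
  refine Finset.sum_le_sum fun k hk => ?_
  rw [Finset.mem_range] at hk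
  refine le_trans ?_ (ha k hk)
  rw [Nat.cast_sub (by omega)]
  push_cast
  have hk' : (k : ℝ) + 1 ≤ n := by exact_mod_cast hk
  have hN' : (1 : ℝ) ≤ N := by exact_mod_cast hN
  have hpos : (0 : ℝ) < n + N - k := by linarith
  rw [← Real.log_div (by linarith) (by linarith)]
  refine (Real.log_le_sub_one_of_pos (div_pos (by linarith) (by linarith))).trans (le_of_eq ?_)
  rw [show (n : ℝ) + N + 1 - (k + 1) = n + N - k by ring]
  field_simp
  ring

lemma key_lemma (u y : ℕ → A) (hlet : ∀ a, ∃ i, u i = a) (n N : ℕ) (hN : 1 ≤ N)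
    (hn : ¬ Occ u y n N) (a : ℕ → ℝ)
    (ha : ∀ k < n, ∀ m, 1 ≤ m → ¬ Occ u y k m → 1 / (m : ℝ) ≤ a k) :
    ∃ l, (n, y) ∈ Pre u l N (shift^[n] y) ∧
      (l : ℝ) ≤ 13 * ∑ k ∈ Finset.range n, a k + 6 * N + 6 := by
  classical
  obtain ⟨e, he⟩ := greedy_exists u y hlet
  obtain ⟨T, t1, t2, t3, t4⟩ := chain u y e he n
  have hbad : ∀ k < n, ¬ Occ u y k (n + N - k) := fun k hk ho =>
    hn (ho.mono hk.le (by omega))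
  have ha' : ∀ k < n, 1 / ((n + N - k : ℕ) : ℝ) ≤ a k := fun k hk =>
    ha k hk _ (by omega) (hbad k hk)
  have ha0 : ∀ k < n, 0 ≤ a k := fun k hk => le_trans (by positivity) (ha' k hk)
  refine ⟨T.card, t4 N ?_, ?_⟩
  · intro h1
    obtain ⟨g1, g2, _⟩ := he n h1
    by_contra hcon
    push Not at hcon
    have := Nat.lt_two_pow_self (n := e n)
    exact hn (g2.mono (by omega) (by omega))
  · have hS := log_sum n N hN a ha'
    have hA := count_A n e (T.filter fun k => ¬ k < 3 * 2 ^ e k) a ha0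
      (fun k hk => t1 k (Finset.mem_filter.1 hk).1)
      (fun k hk k' hk' => t2 k (Finset.mem_filter.1 hk).1 k' (Finset.mem_filter.1 hk').1)
      (fun k hk => not_lt.1 (Finset.mem_filter.1 hk).2) (by
        intro K hK k h1 h2
        obtain ⟨hKT, h3⟩ := Finset.mem_filter.1 hK
        obtain ⟨hK1, hKn⟩ := t1 K hKT
        obtain ⟨g1, g2, g3⟩ := he K hK1
        have hb : 0 < 2 ^ e K := by positivity
        have h2p : 2 ^ (e K + 1) = 2 * 2 ^ e K := by ring
        have hno : ¬ Occ u y k (5 * 2 ^ e K) := by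
          intro ho
          have := g3 (e K + 1) (by omega) (ho.mono (by omega) (by omega))
          omega
        have := ha k (by omega) _ (by omega) hno
        push_cast at this
        rw [one_div_pow]
        have h5 : 1 / (5 * (2 : ℝ) ^ e K) = (1 / 5) * (1 / 2 ^ e K) := by
          field_simp
        rw [h5] at this
        linarith)
    have hcard := Finset.card_filter_add_card_filter_not (s := T) (fun k => k < 3 * 2 ^ e k)
    have hcard' : ((T.filter fun k => k < 3 * 2 ^ e k).card : ℝ) +
        (T.filter fun k => ¬ k < 3 * 2 ^ e k).card = T.card := by exact_mod_cast hcard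
    have hl : (1 / 3 : ℝ) ≤ Real.log (3 / 2) := by
      have := Real.one_sub_inv_le_log_of_pos (x := 3 / 2) (by norm_num)
      norm_num at this ⊢
      linarith
    have hB : (1 / 3 : ℝ) * (T.filter fun k => k < 3 * 2 ^ e k).card ≤
        Real.log (2 * n + 1) := le_trans (mul_le_mul_of_nonneg_right hl (by positivity)) t3
    have h6 : Real.log (2 * n + 1) ≤ Real.log 2 + Real.log (n + N + 1) := by
      rw [← Real.log_mul (by norm_num) (by positivity)]
      apply Real.log_le_log (by positivity)
      have : (0 : ℝ) ≤ N := by positivity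
      linarith
    have h7 : Real.log 2 ≤ 1 := by
      have := Real.log_le_sub_one_of_pos (x := 2) (by norm_num)
      linarith
    have h8 : Real.log (N + 1) ≤ N := by
      have := Real.log_le_sub_one_of_pos (x := (N : ℝ) + 1) (by positivity)
      linarith
    have : (0 : ℝ) ≤ N := by positivity
    linarith

lemma orbitClosure_occ [TopologicalSpace A] [DiscreteTopology A] (u z : ℕ → A)
    (hz : z ∈ orbitClosure u) (m : ℕ) : Occ u z 0 m := by
  have ho : IsOpen (Set.pi (Finset.range m : Set ℕ) fun r => ({z r} : Set A)) :=
    isOpen_set_pi (Finset.range m).finite_toSet fun _ _ => isOpen_discrete _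
  obtain ⟨w, hw1, n, rfl⟩ := mem_closure_iff.1 hz _ ho (by intro r _; simp)
  refine ⟨n, fun r hr => ?_⟩
  have := hw1 r (by simpa using hr)
  rw [Set.mem_singleton_iff, shift_iter] at this
  rw [zero_add, this]

lemma phi_bound [TopologicalSpace A] [DiscreteTopology A] (u y : ℕ → A)
    (hlet : ∀ a, ∃ i, u i = a) (φ : (ℕ → A) → ℝ)
    (hφ : ∀ x ∉ orbitClosure u, φ x = Real.log (1 + 1 / (delta u x : ℝ)))
    (k m : ℕ) (hm : 1 ≤ m) (h : ¬ Occ u y k m) : 1 / (m : ℝ) ≤ φ (shift^[k] y) := by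
  have hK : shift^[k] y ∉ orbitClosure u := by
    intro hmem
    obtain ⟨i, hi⟩ := orbitClosure_occ u _ hmem m
    apply h
    refine ⟨i, fun r hr => ?_⟩
    rw [← hi r hr, shift_iter, zero_add]
  have hbd : ∀ n ∈ {n | prefixWord (shift^[k] y) n ∈ Lang u}, n ≤ m - 1 := by
    intro n hn
    have hn' : Occ u y k n := (prefix_mem_Lang u y k n).1 hn
    by_contra hcon
    exact h (hn'.mono (le_refl _) (by omega))
  have hD1 : delta u (shift^[k] y) ≤ m - 1 := csSup_le' hbd
  have hD2 : 1 ≤ delta u (shift^[k] y) := by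
    apply le_csSup ⟨m - 1, hbd⟩
    refine (prefix_mem_Lang u y k 1).2 ?_
    obtain ⟨i, hi⟩ := hlet (y k)
    refine ⟨i, fun r hr => ?_⟩
    have : r = 0 := by omega
    subst this
    simp [hi]
  rw [hφ _ hK]
  set D := delta u (shift^[k] y)
  have hD2' : (1 : ℝ) ≤ D := by exact_mod_cast hD2
  have hDm : (D : ℝ) + 1 ≤ m := by
    have : D + 1 ≤ m := by omega
    exact_mod_cast this
  have hpos : (0 : ℝ) < 1 + 1 / (D : ℝ) := by positivity
  have h1 := Real.one_sub_inv_le_log_of_pos hpos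
  have h2 : 1 - (1 + 1 / (D : ℝ))⁻¹ = 1 / ((D : ℝ) + 1) := by
    field_simp
    ring
  rw [h2] at h1
  exact le_trans (one_div_le_one_div_of_le (by positivity) hDm) h1

lemma sum_codes {Q α : Type*} (s : Finset Q) (f : Q → α) (hf : Function.Injective f)
    (l : Q → ℕ) (M B : ℕ) (P : ℕ → Finset α) (hP : ∀ k, (P k).card ≤ M ^ k * B)
    (hl : ∀ q, f q ∈ P (l q)) (r : ℝ) (hr : 0 ≤ r) (hMr : M * r ≤ 1 / 2) :
    ∑ q ∈ s, r ^ l q ≤ 2 * B := by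
  classical
  have h1 := Finset.sum_fiberwise_of_maps_to (s := s) (t := s.image l) (g := l)
    (fun q hq => Finset.mem_image_of_mem l hq) (fun q => r ^ l q)
  rw [← h1]
  have h2 : ∀ k ∈ s.image l, ∑ q ∈ s.filter (fun q => l q = k), r ^ l q ≤
      B * (1 / 2 : ℝ) ^ k := by
    intro k _
    have h3 : ∑ q ∈ s.filter (fun q => l q = k), r ^ l q =
        ((s.filter (fun q => l q = k)).card : ℝ) * r ^ k := by
      rw [Finset.sum_congr rfl (g := fun _ => r ^ k)]
      · simp
      · intro q hq
        rw [(Finset.mem_filter.1 hq).2]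
    rw [h3]
    have h4 : (s.filter (fun q => l q = k)).card ≤ M ^ k * B := by
      refine le_trans ?_ (hP k)
      refine Finset.card_le_card_of_injOn f ?_ hf.injOn
      intro q hq
      have := (Finset.mem_filter.1 hq).2
      have h5 := hl q
      rw [this] at h5
      exact h5
    have h4' : ((s.filter (fun q => l q = k)).card : ℝ) ≤ M ^ k * B := by exact_mod_cast h4
    calc _ ≤ ((M : ℝ) ^ k * B) * r ^ k := mul_le_mul_of_nonneg_right h4' (by positivity)
      _ = B * (M * r) ^ k := by rw [mul_pow]; ring
      _ ≤ _ := by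
        apply mul_le_mul_of_nonneg_left _ (by positivity)
        exact pow_le_pow_left₀ (by positivity) hMr k
  refine (Finset.sum_le_sum h2).trans ?_
  rw [← Finset.mul_sum]
  have := sum_le_hasSum (s.image l) (fun i _ => by positivity) hasSum_geometric_two
  have hB : (0 : ℝ) ≤ B := by positivity
  nlinarith

/-- (Proposition `prop:therm:cruc`.) For the potential
`φ(x) = log(1 + 1/δ(x))` off `K` (and `0` on `K`) and a cylinder `J = [w_J]` with
`w_J ∉ L_H`, the induced transfer operator at `Z = 0` applied to `1_J` is `< 1`
for all large `β`: the series
`∑_{n≥1} ∑_{y ∈ J, τ(y)=n, σⁿy=x} exp(-β ∑_{k<n} φ(σᵏy))` converges and is `< 1`. -/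
theorem induced_transfer_operator_lt_one
    {A : Type*} [Fintype A] [DecidableEq A] [TopologicalSpace A] [DiscreteTopology A]
    (hD : 2 ≤ Fintype.card A)
    (H : A → List A) (hne : ∀ a, H a ≠ [])
    (hprim : PrimitiveSubst H) (haper : AperiodicSubst H)
    (hmarked : MarkedSubst H hne)
    (u : ℕ → A) (hu : IsFixedPointSubst H u)
    (φ : (ℕ → A) → ℝ)
    (hφK : ∀ x ∈ orbitClosure u, φ x = 0)
    (hφ : ∀ x ∉ orbitClosure u, φ x = Real.log (1 + 1 / (delta u x : ℝ)))
    (wJ : List A) (hwJ : wJ ∉ Lang u)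
    (J : Set (ℕ → A)) (hJ : J = {y : ℕ → A | prefixWord y wJ.length = wJ}) :
    ∃ β₀ : ℝ, 0 < β₀ ∧ ∀ β : ℝ, β₀ < β → ∀ x ∈ J,
      (Summable fun q : {q : ℕ × (ℕ → A) //
          1 ≤ q.1 ∧ q.2 ∈ J ∧ returnTime J q.2 = q.1 ∧ shift^[q.1] q.2 = x} =>
        Real.exp (-β * ∑ k ∈ Finset.range q.1.1, φ (shift^[k] q.1.2))) ∧
      (∑' q : {q : ℕ × (ℕ → A) //
          1 ≤ q.1 ∧ q.2 ∈ J ∧ returnTime J q.2 = q.1 ∧ shift^[q.1] q.2 = x},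
        Real.exp (-β * ∑ k ∈ Finset.range q.1.1, φ (shift^[k] q.1.2))) < 1 := by
  classical
  obtain ⟨R, hR1, hR⟩ := linear_recurrence hD H hne hprim u hu
  have hper := haper u hu
  have hlet : ∀ a, ∃ i, u i = a := by
    intro a
    obtain ⟨p, _, hp⟩ := hprim
    have h1 := hp (u 0) a
    have h4 := (iter_factor H hne u hu p 0 1).2
    rw [factorAt_one, blockPos_zero] at h4
    rw [h4] at h1
    simp only [factorAt, List.mem_map] at h1
    obtain ⟨j, _, hj⟩ := h1
    exact ⟨_, hj⟩
  set N := wJ.length with hNdef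
  have hN : 1 ≤ N := by
    by_contra hcon
    have h0 : wJ = [] := List.length_eq_zero_iff.1 (by omega)
    apply hwJ
    rw [h0]
    exact ⟨0, by simp [factorAt]⟩
  have hJocc : ∀ (y : ℕ → A) k, shift^[k] y ∈ J → ¬ Occ u y k N := by
    intro y k hy ho
    rw [hJ] at hy
    have h1 := (prefix_mem_Lang u y k N).2 ho
    have h2 : prefixWord (shift^[k] y) N = wJ := hy
    rw [h2] at h1
    exact hwJ h1
  set C := 4 * R ^ 2 with hC
  have hC1 : 1 ≤ C := by have : 1 ≤ R ^ 2 := Nat.one_le_pow _ _ hR1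
                         omega
  have hcnt := Pre_count u C (fun b hb x => count_ext u hper R hR1 hR b hb x)
  choose P hP1 hP2 using hcnt
  have hC1' : (1 : ℝ) ≤ C := by exact_mod_cast hC1
  have hN' : (1 : ℝ) ≤ N := by exact_mod_cast hN
  have hlogC : 0 < Real.log (8 * C) := Real.log_pos (by linarith)
  set β₁ := 13 * Real.log (8 * C) with hβ₁
  have hβ₁pos : 0 < β₁ := by positivity
  set LB := β₁ / 13 * (6 * N + 6) + (N + 1) * Real.log 2 with hLB
  have hlog2 : 0 < Real.log 2 := Real.log_pos (by norm_num)
  have hLBpos : 0 < LB := by positivity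
  refine ⟨β₁ + N * LB, by positivity, ?_⟩
  intro β hβ x hx
  have hββ : 0 < β - β₁ := by
    have : 0 < N * LB := by positivity
    linarith
  have hcode : ∀ q : {q : ℕ × (ℕ → A) //
          1 ≤ q.1 ∧ q.2 ∈ J ∧ returnTime J q.2 = q.1 ∧ shift^[q.1] q.2 = x},
      ∃ l : ℕ, q.1 ∈ Pre u l N x ∧
        (l : ℝ) ≤ 13 * (∑ k ∈ Finset.range q.1.1, φ (shift^[k] q.1.2)) + 6 * N + 6 := by
    rintro ⟨⟨n, y⟩, h1, h2, h3, h4⟩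
    have hx' : shift^[n] y ∈ J := by
      have h4' : shift^[n] y = x := h4
      rw [h4']; exact hx
    obtain ⟨l, hl1, hl2⟩ := key_lemma u y hlet n N hN (hJocc y n hx')
      (fun k => φ (shift^[k] y)) (fun k _ m hm hno => phi_bound u y hlet φ hφ k m hm hno)
    refine ⟨l, ?_, hl2⟩
    have h4' : shift^[n] y = x := h4
    rw [h4'] at hl1
    exact hl1
  choose l hl1 hl2 using hcode
  have hS : ∀ q : {q : ℕ × (ℕ → A) //
          1 ≤ q.1 ∧ q.2 ∈ J ∧ returnTime J q.2 = q.1 ∧ shift^[q.1] q.2 = x},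
      1 / (N : ℝ) ≤ ∑ k ∈ Finset.range q.1.1, φ (shift^[k] q.1.2) := by
    rintro ⟨⟨n, y⟩, h1, h2, h3, h4⟩
    have hx' : shift^[n] y ∈ J := by
      have h4' : shift^[n] y = x := h4
      rw [h4']; exact hx
    have h5 := phi_bound u y hlet φ hφ 0 N hN (hJocc y 0 h2)
    refine h5.trans (Finset.single_le_sum (f := fun k => φ (shift^[k] y)) ?_
      (Finset.mem_range.2 h1))
    intro k hk
    have hk' : k < n := Finset.mem_range.1 hk
    refine le_trans ?_ (phi_bound u y hlet φ hφ k (n + N - k) (by omega)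
      (fun ho => hJocc y n hx' (ho.mono hk'.le (by omega))))
    positivity
  set r : ℝ := (8 * (C : ℝ))⁻¹ with hr
  have hrexp : r = Real.exp (-(β₁ / 13)) := by
    rw [Real.exp_neg, hβ₁, mul_div_cancel_left₀ _ (by norm_num : (13 : ℝ) ≠ 0),
      Real.exp_log (by linarith)]
  set E : ℝ := Real.exp (-((β - β₁) / N)) * Real.exp (β₁ / 13 * (6 * N + 6)) with hE
  have hterm : ∀ q : {q : ℕ × (ℕ → A) //
          1 ≤ q.1 ∧ q.2 ∈ J ∧ returnTime J q.2 = q.1 ∧ shift^[q.1] q.2 = x},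
      Real.exp (-β * ∑ k ∈ Finset.range q.1.1, φ (shift^[k] q.1.2)) ≤ E * r ^ l q := by
    intro q
    rw [hE, hrexp, ← Real.exp_nat_mul, ← Real.exp_add, ← Real.exp_add, Real.exp_le_exp]
    have h1 := mul_le_mul_of_nonneg_left (hS q) hββ.le
    have h2 := mul_le_mul_of_nonneg_left (hl2 q) (show 0 ≤ β₁ / 13 by positivity)
    have h3 : (β - β₁) * (1 / N) = (β - β₁) / N := by ring
    rw [h3] at h1
    nlinarith
  have hbound : ∀ s : Finset {q : ℕ × (ℕ → A) //
          1 ≤ q.1 ∧ q.2 ∈ J ∧ returnTime J q.2 = q.1 ∧ shift^[q.1] q.2 = x},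
      ∑ q ∈ s, Real.exp (-β * ∑ k ∈ Finset.range q.1.1, φ (shift^[k] q.1.2)) ≤
        E * 2 ^ (N + 1) := by
    intro s
    refine (Finset.sum_le_sum fun q _ => hterm q).trans ?_
    rw [← Finset.mul_sum]
    apply mul_le_mul_of_nonneg_left _ (by positivity)
    have := sum_codes s Subtype.val Subtype.val_injective l (4 * C) (2 ^ N)
      (fun k => P k N x) (fun k => hP1 k N x) (fun q => hP2 _ N x _ (hl1 q)) r (by positivity)
      (by
        rw [hr]; push_cast
        apply le_of_eq
        field_simp
        norm_num)
    refine this.trans (le_of_eq ?_)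
    push_cast
    ring
  have hlt : E * 2 ^ (N + 1) < 1 := by
    have h2 : (2 : ℝ) ^ (N + 1) = Real.exp ((N + 1) * Real.log 2) := by
      have h3 : ((N : ℝ) + 1) = ((N + 1 : ℕ) : ℝ) := by push_cast; ring
      rw [h3, Real.exp_nat_mul, Real.exp_log (by norm_num)]
    rw [h2, hE, ← Real.exp_add, ← Real.exp_add, Real.exp_lt_one_iff]
    have h4 : LB < (β - β₁) / N := by
      rw [lt_div_iff₀ (by linarith)]
      linarith
    linarith
  refine ⟨summable_of_sum_le (fun q => (Real.exp_pos _).le) hbound, ?_⟩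
  exact (Real.tsum_le_of_sum_le (fun q => (Real.exp_pos _).le) hbound).trans_lt hlt
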